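/- Let X be an L²-continuous zero-mean process with covariance measure μ on [0,T]², let γ(t) = R(t,t) = Var(X_t), ℰ(t) = μ(D_t) the energy (diagonal mass), and Δ_t = {(s₁,s₂): 0 ≤ s₁ < s₂ ≤ t}. Then for every continuous ψ : [0,∞) → ℝ and every t ∈ [0,T], lim_{ε→0} ∫₀ᵗ ψ(s)(γ(s+ε)−γ(s))/ε ds = ∫₀ᵗ ψ(s) dℰ(s) + 2∫_{Δ_t} ψ(s₂) dμ(s₁,s₂). In particular, taking ψ ≡ 1, γ(t) = ℰ(t) + 2μ(Δ_t), and γ has bounded variation with total variation at most |μ|(D_T) + 2|μ|([0,T]²). -/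

import Mathlib

open Set MeasureTheory Filter
open scoped Topology ENNReal

noncomputable section

/-- Integral of `f` with respect to a finite signed measure, via the Jordan decomposition. -/
def sintegral {α : Type*} [MeasurableSpace α] (μ : SignedMeasure α) (f : α → ℝ) : ℝ :=
  (∫ x, f x ∂μ.toJordanDecomposition.posPart) - ∫ x, f x ∂μ.toJordanDecomposition.negPart

lemma rect_ext (A B : Measure (ℝ × ℝ)) [IsFiniteMeasure A] [IsFiniteMeasure B]
    (h : ∀ a b c d : ℝ, a < b → c < d →
      A.real (Ioc a b ×ˢ Ioc c d) = B.real (Ioc a b ×ˢ Ioc c d)) : A = B := by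
  have hsp : (⋃ n : ℕ, Ioc (-((n:ℝ)+1)) ((n:ℝ)+1)) = univ := by
    ext x
    simp only [mem_iUnion, mem_Ioc, mem_univ, iff_true]
    obtain ⟨n, hn⟩ := exists_nat_gt |x|
    exact ⟨n, by linarith [neg_abs_le x], by linarith [le_abs_self x]⟩
  have hcs : IsCountablySpanning {S : Set ℝ | ∃ l u, l < u ∧ Ioc l u = S} := by
    refine ⟨fun n : ℕ => Ioc (-((n:ℝ)+1)) ((n:ℝ)+1), fun n => ⟨_, _, ?_, rfl⟩, hsp⟩
    have : (0:ℝ) ≤ n := Nat.cast_nonneg n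
    linarith
  have hg : MeasurableSpace.generateFrom {S : Set ℝ | ∃ l u, l < u ∧ Ioc l u = S}
      = (inferInstance : MeasurableSpace ℝ) := by
    rw [← borel_eq_generateFrom_Ioc]
    exact (BorelSpace.measurable_eq).symm
  have hpi : IsPiSystem {S : Set ℝ | ∃ l u, l < u ∧ Ioc l u = S} :=
    isPiSystem_Ioc (id : ℝ → ℝ) id
  refine Measure.ext_of_generateFrom_of_iUnion _
    (fun n : ℕ => Ioc (-((n:ℝ)+1)) ((n:ℝ)+1) ×ˢ Ioc (-((n:ℝ)+1)) ((n:ℝ)+1))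
    (generateFrom_eq_prod hg hg hcs hcs).symm (hpi.prod hpi) ?_ ?_ ?_ ?_
  · ext ⟨x, y⟩
    simp only [mem_iUnion, mem_prod, mem_Ioc, mem_univ, iff_true]
    obtain ⟨n, hn⟩ := exists_nat_gt (max |x| |y|)
    have h1 := le_max_left |x| |y|
    have h2 := le_max_right |x| |y|
    exact ⟨n, ⟨by linarith [neg_abs_le x], by linarith [le_abs_self x]⟩,
      by linarith [neg_abs_le y], by linarith [le_abs_self y]⟩
  · intro n
    have : (0:ℝ) ≤ n := Nat.cast_nonneg n
    exact ⟨_, ⟨_, _, by linarith, rfl⟩, _, ⟨_, _, by linarith, rfl⟩, rfl⟩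
  · intro n
    exact measure_ne_top _ _
  · rintro _ ⟨_, ⟨a, b, hab, rfl⟩, _, ⟨c, d, hcd, rfl⟩, rfl⟩
    have := h a b c d hab hcd
    exact (measureReal_eq_measureReal_iff).1 this

lemma integrable_bdd (P : Measure (ℝ × ℝ)) [IsFiniteMeasure P] (g : ℝ × ℝ → ℝ)
    (hg : Measurable g) (C : ℝ) (h : ∀ q, |g q| ≤ C) : Integrable g P :=
  Integrable.of_bound hg.aestronglyMeasurable C (Eventually.of_forall h)

/-- The kernel that appears after writing the increment of the variance through the measure. -/
def kker (ψ : ℝ → ℝ) (ε s : ℝ) (q : ℝ × ℝ) : ℝ :=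
  if 0 < q.1 ∧ 0 < q.2 ∧ s < max q.1 q.2 ∧ max q.1 q.2 ≤ s + ε then ψ s / ε else 0

lemma kker_meas (ψ : ℝ → ℝ) (hψ : Continuous ψ) (ε : ℝ) :
    Measurable (Function.uncurry (kker ψ ε)) := by
  unfold kker Function.uncurry
  refine Measurable.ite ?_ (by fun_prop) measurable_const
  simp only [ofPred_and]
  refine (measurableSet_lt ?_ ?_).inter ((measurableSet_lt ?_ ?_).inter
    ((measurableSet_lt ?_ ?_).inter (measurableSet_le ?_ ?_))) <;> fun_prop

lemma kker_int (ψ : ℝ → ℝ) (hψ : Continuous ψ) (ε t C : ℝ)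
    (hC : ∀ s ∈ Icc 0 t, |ψ s| ≤ C) (P : Measure (ℝ × ℝ)) [IsFiniteMeasure P] :
    Integrable (Function.uncurry (kker ψ ε)) ((volume.restrict (Ioc 0 t)).prod P) := by
  have h1 : ∀ᵐ z ∂((volume.restrict (Ioc (0:ℝ) t)).prod P), z.1 ∈ Ioc 0 t := by
    have := (Measure.quasiMeasurePreserving_fst (μ := volume.restrict (Ioc (0:ℝ) t)) (ν := P)).ae
      (ae_restrict_mem measurableSet_Ioc)
    exact this
  refine Integrable.of_bound (kker_meas ψ hψ ε).aestronglyMeasurable (C / |ε|) ?_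
  filter_upwards [h1] with z hz
  have hb := hC z.1 ⟨hz.1.le, hz.2⟩
  have : 0 ≤ C := (abs_nonneg _).trans hb
  unfold Function.uncurry kker
  split_ifs
  · rw [Real.norm_eq_abs, abs_div]; gcongr
  · simp; positivity

lemma kker_eq (ψ : ℝ → ℝ) (ε t : ℝ) (q : ℝ × ℝ) :
    ∫ s in Ioc 0 t, kker ψ ε s q =
      if 0 < q.1 ∧ 0 < q.2 then
        ∫ s in Ioc 0 t ∩ Ico (max q.1 q.2 - ε) (max q.1 q.2), ψ s / ε else 0 := by
  split_ifs with h
  · rw [← Measure.restrict_restrict_of_subset (s := Ioc 0 t ∩ Ico (max q.1 q.2 - ε) (max q.1 q.2))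
      (t := Ioc 0 t) inter_subset_left, Measure.restrict_restrict_of_subset inter_subset_left,
      inter_comm, ← Measure.restrict_restrict measurableSet_Ico, ← integral_indicator measurableSet_Ico]
    congr 1
    ext s
    unfold kker indicator
    congr 1
    simp only [h, true_and, mem_Ico, eq_iff_iff]
    constructor
    · rintro ⟨a, b⟩; exact ⟨by linarith, a⟩
    · rintro ⟨a, b⟩; exact ⟨b, by linarith⟩
  · have : ∀ s, kker ψ ε s q = 0 := fun s => if_neg (fun h' => h ⟨h'.1, h'.2.1⟩)
    simp [this]

lemma kker_bound (ψ : ℝ → ℝ) (ε t C : ℝ) (hε : 0 < ε) (hC0 : 0 ≤ C)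
    (hC : ∀ s ∈ Icc 0 t, |ψ s| ≤ C) (q : ℝ × ℝ) :
    ‖∫ s in Ioc 0 t, kker ψ ε s q‖ ≤ C := by
  rw [kker_eq]
  split_ifs with h
  · have h1 : (volume (Ioc 0 t ∩ Ico (max q.1 q.2 - ε) (max q.1 q.2))) ≤ ENNReal.ofReal ε := by
      refine (measure_mono inter_subset_right).trans ?_
      simp
    have h2 := norm_setIntegral_le_of_norm_le_const (f := fun s => ψ s / ε) (C := C / ε)
      (h1.trans_lt ENNReal.ofReal_lt_top) (fun s hs => by
        rw [Real.norm_eq_abs, abs_div, abs_of_pos hε]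
        gcongr
        exact hC s ⟨hs.1.1.le, hs.1.2⟩)
    refine h2.trans ?_
    have h3 : volume.real (Ioc 0 t ∩ Ico (max q.1 q.2 - ε) (max q.1 q.2)) ≤ ε := by
      have := ENNReal.toReal_mono ENNReal.ofReal_ne_top h1
      rwa [ENNReal.toReal_ofReal hε.le] at this
    calc _ ≤ C / ε * ε := by gcongr
      _ = C := by field_simp
  · simpa using hC0

lemma kker_lim (ψ : ℝ → ℝ) (hψ : Continuous ψ) (t : ℝ) (q : ℝ × ℝ) :
    Tendsto (fun ε => ∫ s in Ioc 0 t, kker ψ ε s q) (𝓝[>] 0)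
      (𝓝 (if 0 < q.1 ∧ 0 < q.2 ∧ max q.1 q.2 ≤ t then ψ (max q.1 q.2) else 0)) := by
  simp_rw [kker_eq]
  by_cases h : 0 < q.1 ∧ 0 < q.2
  swap
  · have h' : ¬ (0 < q.1 ∧ 0 < q.2 ∧ max q.1 q.2 ≤ t) := fun h' => h ⟨h'.1, h'.2.1⟩
    simp only [h, h', if_false]
    exact tendsto_const_nhds
  have hm : 0 < max q.1 q.2 := lt_max_of_lt_left h.1
  simp only [h.1, h.2, true_and, if_true, and_self]
  generalize max q.1 q.2 = m at hm
  split_ifs with hmt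
  · have hd : HasDerivAt (fun u => ∫ s in (0:ℝ)..u, ψ s) (ψ m) m :=
      hψ.integral_hasStrictDerivAt 0 m |>.hasDerivAt
    have hs := hd.tendsto_slope_zero_left
    have hneg : Tendsto (fun ε : ℝ => -ε) (𝓝[>] 0) (𝓝[<] 0) := by
      simpa using (tendsto_neg_nhdsGT (a := (0:ℝ)))
    refine (hs.comp hneg).congr' ?_
    have hev : ∀ᶠ ε : ℝ in 𝓝[>] 0, ε < m := nhdsWithin_le_nhds (Iio_mem_nhds hm)
    filter_upwards [hev, self_mem_nhdsWithin] with ε hε1 hε0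
    have hε0 : 0 < ε := hε0
    have : Ioc 0 t ∩ Ico (m - ε) m = Ico (m - ε) m := by
      refine inter_eq_right.2 fun x hx => ⟨?_, ?_⟩
      · linarith [hx.1]
      · linarith [hx.2]
    rw [this, integral_Ico_eq_integral_Ioc, ← intervalIntegral.integral_of_le (by linarith),
      intervalIntegral.integral_div]
    have e1 := intervalIntegral.integral_interval_sub_left (μ := volume)
      (hψ.intervalIntegrable 0 m) (hψ.intervalIntegrable 0 (m - ε))
    simp only [Function.comp, smul_eq_mul, ← sub_eq_add_neg]
    rw [← e1, inv_neg]
    field_simp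
    ring
  · refine tendsto_const_nhds.congr' ?_
    have hev : ∀ᶠ ε : ℝ in 𝓝[>] 0, ε < m - t :=
      nhdsWithin_le_nhds (Iio_mem_nhds (by linarith [not_le.1 hmt]))
    filter_upwards [hev] with ε hε
    have : Ioc 0 t ∩ Ico (m - ε) m = ∅ := by
      ext x
      simp only [mem_inter_iff, mem_Ioc, mem_Ico, mem_empty_iff_false, iff_false]
      rintro ⟨⟨_, a⟩, b, _⟩
      linarith
    simp [this]

lemma kker_tendsto (ψ : ℝ → ℝ) (hψ : Continuous ψ) (t C : ℝ) (hC0 : 0 ≤ C)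
    (hC : ∀ s ∈ Icc 0 t, |ψ s| ≤ C) (P : Measure (ℝ × ℝ)) [IsFiniteMeasure P] :
    Tendsto (fun ε => ∫ s in Ioc 0 t, ∫ q, kker ψ ε s q ∂P) (𝓝[>] 0)
      (𝓝 (∫ q, (if 0 < q.1 ∧ 0 < q.2 ∧ max q.1 q.2 ≤ t then ψ (max q.1 q.2) else 0) ∂P)) := by
  have : ∀ ε, ∫ s in Ioc 0 t, ∫ q, kker ψ ε s q ∂P = ∫ q, (∫ s in Ioc 0 t, kker ψ ε s q) ∂P :=
    fun ε => integral_integral_swap (kker_int ψ hψ ε t C hC P)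
  simp_rw [this]
  refine tendsto_integral_filter_of_dominated_convergence (fun _ => C) ?_ ?_
    (integrable_const C) ?_
  · refine Eventually.of_forall fun ε => ?_
    exact (kker_int ψ hψ ε t C hC P).integral_prod_right.aestronglyMeasurable
  · filter_upwards [self_mem_nhdsWithin] with ε hε
    exact Eventually.of_forall fun q => kker_bound ψ ε t C hε hC0 hC q
  · exact Eventually.of_forall fun q => kker_lim ψ hψ t q

lemma kker_real (ψ : ℝ → ℝ) (ε s : ℝ) (hε : 0 < ε) (P : Measure (ℝ × ℝ)) [IsFiniteMeasure P] :
    ∫ q, kker ψ ε s q ∂P =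
      (P.real (Ioc 0 (s + ε) ×ˢ Ioc 0 (s + ε)) - P.real (Ioc 0 s ×ˢ Ioc 0 s)) * (ψ s / ε) := by
  have hsub : Ioc 0 s ×ˢ Ioc 0 s ⊆ Ioc 0 (s + ε) ×ˢ Ioc 0 (s + ε) := by
    have : Ioc 0 s ⊆ Ioc 0 (s + ε) := Ioc_subset_Ioc_right (by linarith)
    exact prod_mono this this
  have hm : MeasurableSet (Ioc 0 s ×ˢ Ioc 0 s) := measurableSet_Ioc.prod measurableSet_Ioc
  have hm' : MeasurableSet (Ioc 0 (s + ε) ×ˢ Ioc 0 (s + ε)) :=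
    measurableSet_Ioc.prod measurableSet_Ioc
  rw [← measureReal_sdiff hsub hm]
  have : kker ψ ε s = indicator
      ((Ioc 0 (s + ε) ×ˢ Ioc 0 (s + ε)) \ (Ioc 0 s ×ˢ Ioc 0 s)) (fun _ => ψ s / ε) := by
    ext q
    unfold kker indicator
    congr 1
    simp only [Set.mem_sdiff, mem_prod, mem_Ioc, eq_iff_iff, max_le_iff, lt_max_iff]
    constructor
    · rintro ⟨a, b, c, d, e⟩
      refine ⟨⟨⟨a, d⟩, b, e⟩, ?_⟩
      rintro ⟨⟨_, f⟩, _, g⟩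
      rcases c with c | c <;> linarith
    · rintro ⟨⟨⟨a, d⟩, b, e⟩, f⟩
      refine ⟨a, b, ?_, d, e⟩
      by_contra! hc
      exact f ⟨⟨a, hc.1⟩, b, hc.2⟩
  rw [this, integral_indicator (hm'.diff hm)]
  simp

lemma swap_eq (P N : Measure (ℝ × ℝ)) [IsFiniteMeasure P] [IsFiniteMeasure N]
    (R : ℝ → ℝ → ℝ) (hsym : ∀ s t, R s t = R t s)
    (hμ : ∀ a₁ b₁ a₂ b₂ : ℝ, a₁ ≤ b₁ → a₂ ≤ b₂ →
      P.real (Ioc a₁ b₁ ×ˢ Ioc a₂ b₂) - N.real (Ioc a₁ b₁ ×ˢ Ioc a₂ b₂)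
        = R b₁ b₂ + R a₁ a₂ - R a₁ b₂ - R b₁ a₂) :
    P + N.map Prod.swap = N + P.map Prod.swap := by
  refine rect_ext _ _ fun a b c d hab hcd => ?_
  have hm : MeasurableSet (Ioc a b ×ˢ Ioc c d) := measurableSet_Ioc.prod measurableSet_Ioc
  rw [measureReal_add_apply, measureReal_add_apply,
    map_measureReal_apply measurable_swap hm, map_measureReal_apply measurable_swap hm,
    preimage_swap_prod]
  have h1 := hμ a b c d hab.le hcd.le
  have h2 := hμ c d a b hcd.le hab.le
  linarith [hsym b d, hsym a c, hsym a d, hsym b c]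

lemma line_eq (P N : Measure (ℝ × ℝ)) [IsFiniteMeasure P] [IsFiniteMeasure N]
    (R : ℝ → ℝ → ℝ) (hRcont : Continuous fun p : ℝ × ℝ => R p.1 p.2)
    (hμ : ∀ a₁ b₁ a₂ b₂ : ℝ, a₁ ≤ b₁ → a₂ ≤ b₂ →
      P.real (Ioc a₁ b₁ ×ˢ Ioc a₂ b₂) - N.real (Ioc a₁ b₁ ×ˢ Ioc a₂ b₂)
        = R b₁ b₂ + R a₁ a₂ - R a₁ b₂ - R b₁ a₂) :
    P.restrict {q | q.1 = 0} = N.restrict {q | q.1 = 0} := by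
  refine rect_ext _ _ fun a b c d hab hcd => ?_
  have hm : MeasurableSet (Ioc a b ×ˢ Ioc c d) := measurableSet_Ioc.prod measurableSet_Ioc
  rw [measureReal_restrict_apply hm, measureReal_restrict_apply hm]
  by_cases h0 : (0:ℝ) ∈ Ioc a b
  swap
  · have : (Ioc a b ×ˢ Ioc c d) ∩ {q : ℝ × ℝ | q.1 = 0} = ∅ := by
      ext ⟨x, y⟩
      simp only [mem_inter_iff, mem_prod, mem_ofPred_eq, mem_empty_iff_false, iff_false]
      rintro ⟨⟨h, _⟩, rfl⟩
      exact h0 h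
    simp [this]
  set S : ℕ → Set (ℝ × ℝ) := fun n => Ioc (-(1 / ((n:ℝ) + 1))) 0 ×ˢ Ioc c d with hS
  have hSi : (Ioc a b ×ˢ Ioc c d) ∩ {q : ℝ × ℝ | q.1 = 0} = ⋂ n, S n := by
    ext ⟨x, y⟩
    simp only [mem_inter_iff, mem_prod, mem_ofPred_eq, mem_iInter, hS]
    constructor
    · rintro ⟨⟨h, h'⟩, rfl⟩ n
      refine ⟨⟨?_, le_rfl⟩, h'⟩
      have : (0:ℝ) < 1 / ((n:ℝ) + 1) := by positivity
      linarith
    · intro h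
      have hx : x = 0 := by
        refine le_antisymm (h 0).1.2 ?_
        by_contra! hx
        obtain ⟨n, hn⟩ := exists_nat_one_div_lt (neg_pos.2 hx)
        have := (h n).1.1
        linarith
      subst hx
      exact ⟨⟨h0, (h 0).2⟩, rfl⟩
  have hanti : Antitone S := by
    intro m n hmn
    refine prod_mono (Ioc_subset_Ioc_left ?_) subset_rfl
    have := Nat.one_div_le_one_div (α := ℝ) hmn
    linarith
  have hlim : ∀ (Q : Measure (ℝ × ℝ)) [IsFiniteMeasure Q],
      Tendsto (fun n => Q.real (S n)) atTop (𝓝 (Q.real (⋂ n, S n))) := by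
    intro Q _
    have := tendsto_measure_iInter_atTop (μ := Q) (s := S)
      (fun n => (measurableSet_Ioc.prod measurableSet_Ioc).nullMeasurableSet) hanti
      ⟨0, measure_ne_top _ _⟩
    exact (ENNReal.tendsto_toReal (measure_ne_top _ _)).comp this
  have h1 := (hlim P).sub (hlim N)
  have hz : Tendsto (fun n : ℕ => -(1 / ((n:ℝ) + 1))) atTop (𝓝 0) := by
    simpa using (tendsto_one_div_add_atTop_nhds_zero_nat (𝕜 := ℝ)).neg
  have hc : Continuous fun x : ℝ => R 0 d + R x c - R x d - R 0 c := by
    have e1 : Continuous fun x : ℝ => R x c := hRcont.comp (Continuous.prodMk_left c)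
    have e2 : Continuous fun x : ℝ => R x d := hRcont.comp (Continuous.prodMk_left d)
    fun_prop
  have h2 := (hc.tendsto 0).comp hz
  have h3 : (fun n => P.real (S n) - N.real (S n)) =
      (fun x : ℝ => R 0 d + R x c - R x d - R 0 c) ∘ (fun n : ℕ => -(1 / ((n:ℝ) + 1))) := by
    ext n
    refine hμ _ _ _ _ ?_ hcd.le
    have : (0:ℝ) < 1 / ((n:ℝ) + 1) := by positivity
    linarith
  rw [h3] at h1
  have := tendsto_nhds_unique h1 h2
  rw [hSi]
  linarith

/-- The integrand of the claimed limit. -/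
def fker (ψ : ℝ → ℝ) (t : ℝ) (q : ℝ × ℝ) : ℝ :=
  (if q.1 = q.2 ∧ 0 ≤ q.1 ∧ q.1 ≤ t then ψ q.2 else 0) +
  (if 0 ≤ q.1 ∧ q.1 < q.2 ∧ q.2 ≤ t then 2 * ψ q.2 else 0)

lemma key_eq (P N : Measure (ℝ × ℝ)) [IsFiniteMeasure P] [IsFiniteMeasure N]
    (hsw : P + N.map Prod.swap = N + P.map Prod.swap)
    (hl : P.restrict {q | q.1 = 0} = N.restrict {q | q.1 = 0})
    (ψ : ℝ → ℝ) (hψ : Continuous ψ) (t C : ℝ) (hC0 : 0 ≤ C) (hC : ∀ s ∈ Icc 0 t, |ψ s| ≤ C) :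
    (∫ q, (if 0 < q.1 ∧ 0 < q.2 ∧ max q.1 q.2 ≤ t then ψ (max q.1 q.2) else 0) ∂P) -
    (∫ q, (if 0 < q.1 ∧ 0 < q.2 ∧ max q.1 q.2 ≤ t then ψ (max q.1 q.2) else 0) ∂N) =
    (∫ q, fker ψ t q ∂P) - ∫ q, fker ψ t q ∂N := by
  set d : ℝ × ℝ → ℝ := fun q => if q.1 = q.2 ∧ 0 < q.1 ∧ q.1 ≤ t then ψ q.2 else 0 with hd
  set k : ℝ × ℝ → ℝ := fun q => if 0 < q.1 ∧ q.1 < q.2 ∧ q.2 ≤ t then ψ q.2 else 0 with hk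
  set L : Set (ℝ × ℝ) := {q | q.1 = 0} with hL
  have hLm : MeasurableSet L := measurableSet_eq_fun measurable_fst measurable_const
  have hdm : Measurable d := by
    refine Measurable.ite ?_ (by fun_prop) measurable_const
    simp only [ofPred_and]
    refine (measurableSet_eq_fun ?_ ?_).inter ((measurableSet_lt ?_ ?_).inter
      (measurableSet_le ?_ ?_)) <;> fun_prop
  have hkm : Measurable k := by
    refine Measurable.ite ?_ (by fun_prop) measurable_const
    simp only [ofPred_and]
    refine (measurableSet_lt ?_ ?_).inter ((measurableSet_lt ?_ ?_).inter
      (measurableSet_le ?_ ?_)) <;> fun_prop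
  have hfm : Measurable (fker ψ t) := by
    refine Measurable.add (Measurable.ite ?_ (by fun_prop) measurable_const)
      (Measurable.ite ?_ (by fun_prop) measurable_const)
    · simp only [ofPred_and]
      refine (measurableSet_eq_fun ?_ ?_).inter ((measurableSet_le ?_ ?_).inter
        (measurableSet_le ?_ ?_)) <;> fun_prop
    · simp only [ofPred_and]
      refine (measurableSet_le ?_ ?_).inter ((measurableSet_lt ?_ ?_).inter
        (measurableSet_le ?_ ?_)) <;> fun_prop
  have hdb : ∀ q, |d q| ≤ C := by
    intro q
    simp only [hd]
    split_ifs with h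
    · exact hC _ ⟨by linarith [h.1, h.2.1], by linarith [h.1, h.2.2]⟩
    · simpa using hC0
  have hkb : ∀ q, |k q| ≤ C := by
    intro q
    simp only [hk]
    split_ifs with h
    · exact hC _ ⟨by linarith [h.1, h.2.1], h.2.2⟩
    · simpa using hC0
  have hfb : ∀ q, |fker ψ t q| ≤ C + 2 * C := by
    intro q
    refine (abs_add_le _ _).trans (add_le_add ?_ ?_)
    · split_ifs with h
      · exact hC _ ⟨by linarith [h.1, h.2.1], by linarith [h.1, h.2.2]⟩
      · simpa using hC0
    · split_ifs with h
      · rw [abs_mul, abs_two]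
        have := hC q.2 ⟨by linarith [h.1, h.2.1], h.2.2⟩
        linarith
      · simpa using hC0
  have hdi : ∀ (Q : Measure (ℝ × ℝ)) [IsFiniteMeasure Q], Integrable d Q :=
    fun Q _ => integrable_bdd Q d hdm C hdb
  have hki : ∀ (Q : Measure (ℝ × ℝ)) [IsFiniteMeasure Q], Integrable k Q :=
    fun Q _ => integrable_bdd Q k hkm C hkb
  have hksi : ∀ (Q : Measure (ℝ × ℝ)) [IsFiniteMeasure Q], Integrable (fun q => k q.swap) Q :=
    fun Q _ => integrable_bdd Q _ (hkm.comp measurable_swap) C (fun q => hkb _)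
  have hfi : ∀ (Q : Measure (ℝ × ℝ)) [IsFiniteMeasure Q], Integrable (fker ψ t) Q :=
    fun Q _ => integrable_bdd Q _ hfm _ hfb
  have eh : ∀ q : ℝ × ℝ,
      (if 0 < q.1 ∧ 0 < q.2 ∧ max q.1 q.2 ≤ t then ψ (max q.1 q.2) else 0)
        = d q + k q + k q.swap := by
    rintro ⟨x, y⟩
    simp only [hd, hk, Prod.swap, Prod.fst_swap, Prod.snd_swap]
    rcases lt_trichotomy x y with h | h | h
    · have n1 : ¬ (x = y ∧ 0 < x ∧ x ≤ t) := fun h' => h.ne h'.1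
      have n2 : ¬ (0 < y ∧ y < x ∧ x ≤ t) := fun h' => h.not_gt h'.2.1
      have n3 : (0 < x ∧ 0 < y ∧ y ≤ t) ↔ (0 < x ∧ x < y ∧ y ≤ t) :=
        ⟨fun g => ⟨g.1, h, g.2.2⟩, fun g => ⟨g.1, g.1.trans h, g.2.2⟩⟩
      rw [max_eq_right h.le, if_neg n1, if_neg n2, if_congr n3 rfl rfl, zero_add, add_zero]
    · subst h
      simp
    · have n1 : ¬ (x = y ∧ 0 < x ∧ x ≤ t) := fun h' => h.ne' h'.1
      have n2 : ¬ (0 < x ∧ x < y ∧ y ≤ t) := fun h' => h.not_gt h'.2.1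
      have n3 : (0 < x ∧ 0 < y ∧ x ≤ t) ↔ (0 < y ∧ y < x ∧ x ≤ t) :=
        ⟨fun g => ⟨g.2.1, h, g.2.2⟩, fun g => ⟨g.1.trans h, g.1, g.2.2⟩⟩
      rw [max_eq_left h.le, if_neg n1, if_neg n2, if_congr n3 rfl rfl, zero_add, zero_add]
  have ef : ∀ q : ℝ × ℝ, fker ψ t q = d q + 2 * k q + L.indicator (fker ψ t) q := by
    rintro ⟨x, y⟩
    by_cases hx : x = 0
    · subst hx
      have : ((0:ℝ), y) ∈ L := rfl
      rw [indicator_of_mem this]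
      simp [hd, hk]
    · have : ((x:ℝ), y) ∉ L := hx
      rw [indicator_of_notMem this]
      have h0 : 0 ≤ x ↔ 0 < x := ⟨fun h => lt_of_le_of_ne h (Ne.symm hx), le_of_lt⟩
      simp only [fker, hd, hk, h0, add_zero, mul_ite, mul_zero]
  have Ih : ∀ (Q : Measure (ℝ × ℝ)) [IsFiniteMeasure Q],
      ∫ q, (if 0 < q.1 ∧ 0 < q.2 ∧ max q.1 q.2 ≤ t then ψ (max q.1 q.2) else 0) ∂Q
        = ∫ q, d q ∂Q + ∫ q, k q ∂Q + ∫ q, k q.swap ∂Q := by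
    intro Q _
    simp_rw [eh]
    have h1 : Integrable (fun q => d q + k q) Q := (hdi Q).add (hki Q)
    rw [integral_add h1 (hksi Q), integral_add (hdi Q) (hki Q)]
  have If : ∀ (Q : Measure (ℝ × ℝ)) [IsFiniteMeasure Q],
      ∫ q, fker ψ t q ∂Q
        = ∫ q, d q ∂Q + 2 * ∫ q, k q ∂Q + ∫ q, fker ψ t q ∂(Q.restrict L) := by
    intro Q _
    have h1 : Integrable (fun q => d q + 2 * k q) Q := (hdi Q).add ((hki Q).const_mul 2)
    rw [← integral_indicator hLm, ← integral_const_mul, ← integral_add (hdi Q) ((hki Q).const_mul 2),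
      ← integral_add h1 ((hfi Q).indicator hLm)]
    exact integral_congr_ae (Eventually.of_forall ef)
  rw [Ih P, Ih N, If P, If N, hl]
  have hs : ∫ q, k q ∂P + ∫ q, k q.swap ∂N = ∫ q, k q ∂N + ∫ q, k q.swap ∂P := by
    have := congrArg (fun Q => ∫ q, k q ∂Q) hsw
    rw [integral_add_measure (hki _) (hki _), integral_add_measure (hki _) (hki _),
      integral_map measurable_swap.aemeasurable hkm.aestronglyMeasurable,
      integral_map measurable_swap.aemeasurable hkm.aestronglyMeasurable] at this
    exact this
  linarith

theorem stmt_17 {Ω : Type*} [MeasureSpace Ω] [IsProbabilityMeasure (volume : Measure Ω)]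
    (T : ℝ) (hT : 0 < T) (X : ℝ → Ω → ℝ)
    (hint : ∀ s t : ℝ, Integrable (fun ω => X s ω * X t ω))
    (hX0 : ∀ ω, X 0 ω = 0) (hmean : ∀ t : ℝ, ∫ ω, X t ω = 0)
    (R : ℝ → ℝ → ℝ) (hR : ∀ s t : ℝ, R s t = ∫ ω, X s ω * X t ω)
    (hRcont : Continuous fun p : ℝ × ℝ => R p.1 p.2)
    (μ : SignedMeasure (ℝ × ℝ))
    (hμ : ∀ a₁ b₁ a₂ b₂ : ℝ, a₁ ≤ b₁ → a₂ ≤ b₂ →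
      μ (Ioc a₁ b₁ ×ˢ Ioc a₂ b₂) = R b₁ b₂ + R a₁ a₂ - R a₁ b₂ - R b₁ a₂)
    (hatom : ∀ q : ℝ × ℝ, μ.totalVariation {q} = 0) :
    (∀ ψ : ℝ → ℝ, Continuous ψ → ∀ t ∈ Icc (0:ℝ) T,
      Tendsto (fun ε : ℝ =>
          ∫ s in Ioc (0:ℝ) t, ψ s * (R (s + ε) (s + ε) - R s s) / ε)
        (𝓝[>] 0)
        (𝓝 (sintegral μ (fun q =>
            (if q.1 = q.2 ∧ 0 ≤ q.1 ∧ q.1 ≤ t then ψ q.2 else 0) +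
            (if 0 ≤ q.1 ∧ q.1 < q.2 ∧ q.2 ≤ t then 2 * ψ q.2 else 0))))) ∧
    (∀ t ∈ Icc (0:ℝ) T,
      R t t = μ {q : ℝ × ℝ | q.1 = q.2 ∧ q.1 ∈ Icc 0 t}
        + 2 * μ {q : ℝ × ℝ | 0 ≤ q.1 ∧ q.1 < q.2 ∧ q.2 ≤ t}) ∧
    eVariationOn (fun t => R t t) (Icc 0 T) ≤
      μ.totalVariation {q : ℝ × ℝ | q.1 = q.2 ∧ q.1 ∈ Icc 0 T}
        + 2 * μ.totalVariation (Icc 0 T ×ˢ Icc 0 T) := by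
  have happ : ∀ s : Set (ℝ × ℝ), MeasurableSet s →
      μ s = μ.toJordanDecomposition.posPart.real s - μ.toJordanDecomposition.negPart.real s :=
    fun s hs => μ.apply_eq_posPart_real_sub_negPart_real hs
  set P := μ.toJordanDecomposition.posPart with hP
  set N := μ.toJordanDecomposition.negPart with hN
  have hsym : ∀ s t, R s t = R t s := by
    intro s t
    simp only [hR, mul_comm]
  have hR0 : ∀ t, R 0 t = 0 := by
    intro t
    simp [hR, hX0]
  have hμ' : ∀ a₁ b₁ a₂ b₂ : ℝ, a₁ ≤ b₁ → a₂ ≤ b₂ →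
      P.real (Ioc a₁ b₁ ×ˢ Ioc a₂ b₂) - N.real (Ioc a₁ b₁ ×ˢ Ioc a₂ b₂)
        = R b₁ b₂ + R a₁ a₂ - R a₁ b₂ - R b₁ a₂ := by
    intro a b c d hab hcd
    rw [← hμ a b c d hab hcd, happ _ (measurableSet_Ioc.prod measurableSet_Ioc)]
  have hsw := swap_eq P N R hsym hμ'
  have hl := line_eq P N R hRcont hμ'
  have hg : ∀ t, 0 ≤ t → P.real (Ioc 0 t ×ˢ Ioc 0 t) - N.real (Ioc 0 t ×ˢ Ioc 0 t) = R t t := by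
    intro t ht
    rw [hμ' 0 t 0 t ht ht, hsym t 0, hR0, hR0]
    ring
  have hDm : ∀ t : ℝ, MeasurableSet {q : ℝ × ℝ | q.1 = q.2 ∧ q.1 ∈ Icc 0 t} := by
    intro t
    simp only [mem_Icc, ofPred_and]
    refine (measurableSet_eq_fun ?_ ?_).inter ((measurableSet_le ?_ ?_).inter
        (measurableSet_le ?_ ?_)) <;> fun_prop
  have hEm : ∀ t : ℝ, MeasurableSet {q : ℝ × ℝ | 0 ≤ q.1 ∧ q.1 < q.2 ∧ q.2 ≤ t} := by
    intro t
    simp only [ofPred_and]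
    refine (measurableSet_le ?_ ?_).inter ((measurableSet_lt ?_ ?_).inter
        (measurableSet_le ?_ ?_)) <;> fun_prop
  have part2 : ∀ t ∈ Icc (0:ℝ) T,
      R t t = μ {q : ℝ × ℝ | q.1 = q.2 ∧ q.1 ∈ Icc 0 t}
        + 2 * μ {q : ℝ × ℝ | 0 ≤ q.1 ∧ q.1 < q.2 ∧ q.2 ≤ t} := by
    intro t ht
    have key := key_eq P N hsw hl (fun _ => 1) continuous_const t 1 zero_le_one
      (fun s _ => by simp)
    have e1 : ∀ (Q : Measure (ℝ × ℝ)) [IsFiniteMeasure Q],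
        ∫ q, (if 0 < q.1 ∧ 0 < q.2 ∧ max q.1 q.2 ≤ t then (1:ℝ) else 0) ∂Q
          = Q.real (Ioc 0 t ×ˢ Ioc 0 t) := by
      intro Q _
      rw [← integral_indicator_one (measurableSet_Ioc.prod measurableSet_Ioc)]
      congr 1
      ext q
      unfold indicator
      congr 1
      simp only [max_le_iff, mem_prod, mem_Ioc, eq_iff_iff]
      tauto
    have e2 : ∀ (Q : Measure (ℝ × ℝ)) [IsFiniteMeasure Q],
        ∫ q, fker (fun _ => 1) t q ∂Q = Q.real {q : ℝ × ℝ | q.1 = q.2 ∧ q.1 ∈ Icc 0 t}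
          + 2 * Q.real {q : ℝ × ℝ | 0 ≤ q.1 ∧ q.1 < q.2 ∧ q.2 ≤ t} := by
      intro Q _
      rw [← integral_indicator_one (hDm t), ← integral_indicator_one (hEm t),
        ← integral_const_mul, ← integral_add]
      · congr 1
        ext q
        simp only [fker, indicator, mem_ofPred_eq, mem_Icc, Pi.one_apply, mul_ite, mul_zero]
      · exact (integrable_const (1:ℝ)).indicator (hDm t)
      · exact ((integrable_const (1:ℝ)).indicator (hEm t)).const_mul 2
    rw [e1 P, e1 N, e2 P, e2 N, hg t ht.1] at key
    rw [key, happ _ (hDm t), happ _ (hEm t)]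
    ring
  refine ⟨?_, part2, ?_⟩
  · intro ψ hψ t ht
    obtain ⟨C, hC⟩ := (isCompact_Icc (a := (0:ℝ)) (b := t)).exists_bound_of_continuousOn
      hψ.continuousOn
    have hC : ∀ s ∈ Icc 0 t, |ψ s| ≤ C := hC
    have hC0 : 0 ≤ C := (abs_nonneg _).trans (hC 0 ⟨le_rfl, ht.1⟩)
    have hlim := (kker_tendsto ψ hψ t C hC0 hC P).sub (kker_tendsto ψ hψ t C hC0 hC N)
    rw [key_eq P N hsw hl ψ hψ t C hC0 hC] at hlim
    refine hlim.congr' ?_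
    filter_upwards [self_mem_nhdsWithin] with ε hε
    have hε : 0 < ε := hε
    have i1 : Integrable (fun s => ∫ q, kker ψ ε s q ∂P) (volume.restrict (Ioc 0 t)) :=
      (kker_int ψ hψ ε t C hC P).integral_prod_left
    have i2 : Integrable (fun s => ∫ q, kker ψ ε s q ∂N) (volume.restrict (Ioc 0 t)) :=
      (kker_int ψ hψ ε t C hC N).integral_prod_left
    rw [← integral_sub i1 i2]
    refine setIntegral_congr_fun measurableSet_Ioc fun s hs => ?_
    beta_reduce
    rw [kker_real ψ ε s hε P, kker_real ψ ε s hε N, ← hg s hs.1.le,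
      ← hg (s + ε) (by linarith [hs.1])]
    ring
  · set V := μ.totalVariation with hV
    set F : ℝ → ℝ := fun t => V.real {q : ℝ × ℝ | q.1 = q.2 ∧ q.1 ∈ Icc 0 t}
      + 2 * V.real {q : ℝ × ℝ | 0 ≤ q.1 ∧ q.1 < q.2 ∧ q.2 ≤ t} with hF
    have hinc : ∀ A B : Set (ℝ × ℝ), MeasurableSet A → MeasurableSet B → A ⊆ B →
        |μ B - μ A| ≤ V.real B - V.real A := by
      intro A B hA hB hAB
      rw [← measureReal_sdiff hAB hA, happ B hB, happ A hA]
      have h1 := measureReal_sdiff (μ := P) hAB hA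
      have h2 := measureReal_sdiff (μ := N) hAB hA
      have h3 := μ.norm_le_totalVariation (B \ A)
      rw [happ _ (hB.diff hA), h1, h2, Real.norm_eq_abs] at h3
      convert h3 using 2
      ring
    have hstep : ∀ a ∈ Icc (0:ℝ) T, ∀ b ∈ Icc (0:ℝ) T, a ≤ b →
        |R b b - R a a| ≤ F b - F a := by
      intro a ha b hb hab
      rw [part2 a ha, part2 b hb]
      have h1 := hinc _ _ (hDm a) (hDm b) (fun q hq => ⟨hq.1, hq.2.1, hq.2.2.trans hab⟩)
      have h2 := hinc _ _ (hEm a) (hEm b) (fun q hq => ⟨hq.1, hq.2.1, hq.2.2.trans hab⟩)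
      simp only [hF]
      rw [abs_le] at *
      constructor <;> linarith [h1.1, h1.2, h2.1, h2.2]
    have hmono : MonotoneOn F (Icc 0 T) := by
      intro a ha b hb hab
      have := (abs_nonneg _).trans (hstep a ha b hb hab)
      linarith
    have hle : eVariationOn (fun t => R t t) (Icc 0 T) ≤ eVariationOn F (Icc 0 T) := by
      unfold eVariationOn
      refine iSup_mono fun p => Finset.sum_le_sum fun i _ => ?_
      have h := hstep _ (p.2.2.2 i) _ (p.2.2.2 (i+1)) (p.2.2.1 (Nat.le_succ i))
      rw [edist_dist, edist_dist, Real.dist_eq, Real.dist_eq]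
      exact ENNReal.ofReal_le_ofReal (h.trans (le_abs_self _))
    have h0 : (0:ℝ) ∈ Icc 0 T := ⟨le_rfl, hT.le⟩
    have h1 : T ∈ Icc 0 T := ⟨hT.le, le_rfl⟩
    have hv := hmono.eVariationOn_eq h0 h1
    rw [inter_self] at hv
    refine hle.trans (hv.le.trans ?_)
    have hF0 : 0 ≤ F 0 := by simp only [hF]; positivity
    have h2 : F T - F 0 ≤ V.real {q : ℝ × ℝ | q.1 = q.2 ∧ q.1 ∈ Icc 0 T}
        + 2 * V.real (Icc 0 T ×ˢ Icc 0 T) := by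
      have : V.real {q : ℝ × ℝ | 0 ≤ q.1 ∧ q.1 < q.2 ∧ q.2 ≤ T} ≤ V.real (Icc 0 T ×ˢ Icc 0 T) :=
        measureReal_mono (fun q hq => ⟨⟨hq.1, by linarith [hq.2.1, hq.2.2]⟩,
          by linarith [hq.1, hq.2.1], hq.2.2⟩)
      simp only [hF] at hF0 ⊢
      linarith
    refine (ENNReal.ofReal_le_ofReal h2).trans ?_
    rw [ENNReal.ofReal_add (by positivity) (by positivity), ENNReal.ofReal_mul (by norm_num),
      ofReal_measureReal, ofReal_measureReal]
    simp
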